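/- Let E be a compatible set of n-cbc whose stable E^∘ is bordered by (P, Q). Then for every X ∈ E, every d_1 ∈ ℤ coprime to |Q| and every d_2 ∈ ℤ coprime to |P|, the set E ∪ {φ_{d_1,d_2}(X)} is a compatible set of n-cbc whose stable is bordered by (P, Q), where φ_{d_1,d_2}(X) := { a^{(d_1 i) mod n} b a^{(d_2 j) mod n} : a^i b a^j ∈ X }. -/

import Mathlib

/-!
The sets of bayonet words involved are encoded as matrices of multiplicities indexed by
`ZMod n × ZMod n` (`indMat`, `wset`). Composition `∘_r` becomes the product `N * shift r M`
(`comp_wset`), and for a `0/1` matrix `N` the pair `(P, Q)` borders the encoded set exactly when the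
triple pairing of `P`, `N` and `Q` equals `1` at all residues (`isBorder_wset_iff`).

The arithmetic input is a weighted form of Tijdeman's theorem (`conv_int`): if the convolution of two
weights on `ZMod n` is constantly `1`, one of them may be dilated by any integer coprime to its mass.
Applied to the left coordinate and then to the right one, it shows that a letter pairing to `1` with
a left and a right weight may be replaced by its dilation (`pairing_dil_eq_one`). Any prefix of a
composition, together with `P`, is such a left weight, of the same mass as `P`; any suffix, together
with `Q`, is such a right weight. Hence all occurrences of the new letter can be introduced one by
one, from left to right, and every composition over the enlarged family pairs to `1` with `P` and `Q`
(`pairing_lctx_rctx`). The induction starts from compositions over the given family, which have `0/1`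
matrices by a counting argument (`prods_le_one`).

Conversely these pairings contain everything needed (`isCbc_and_isBorder`): entries are at most `1`,
the total mass is `n`, and the set together with `a^n` is a code, because two decodings of one word
would produce an entry at least `2` in some composition (`decode`). The sets so encoded form a stable
set, which contains the stable closure.
-/

namespace CBC

variable {A : Type*}

/-- `a^i` -/
def apow (a : A) (i : ℕ) : FreeMonoid A := (FreeMonoid.of a) ^ i

/-- the bayonet word `a^i b a^j` -/
def bay (a b : A) (i j : ℕ) : FreeMonoid A := apow a i * FreeMonoid.of b * apow a j

/-- `X` is a (variable-length) code -/
def IsCode (X : Set (FreeMonoid A)) : Prop :=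
  ∀ l m : List (FreeMonoid A), (∀ w ∈ l, w ∈ X) → (∀ w ∈ m, w ∈ X) →
    l.prod = m.prod → l = m

/-- `X` is a maximal code -/
def IsMaximalCode (X : Set (FreeMonoid A)) : Prop :=
  IsCode X ∧ ∀ Y : Set (FreeMonoid A), IsCode Y → X ⊆ Y → Y = X

/-- a bayonet code : a code included in `a^* b a^*` -/
def IsBayonetCode (a b : A) (Y : Set (FreeMonoid A)) : Prop :=
  (∀ w ∈ Y, ∃ i j : ℕ, w = bay a b i j) ∧ IsCode Y

/-- an `n`-complete bayonet code -/
def IsCbc (a b : A) (n : ℕ) (X : Set (FreeMonoid A)) : Prop :=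
  (∀ w ∈ X, ∃ i < n, ∃ j < n, w = bay a b i j) ∧ X.ncard = n ∧
    IsCode (insert (apow a n) X)

/-- the composition `X ∘_r Y` -/
def comp (a b : A) (n r : ℕ) (X Y : Set (FreeMonoid A)) : Set (FreeMonoid A) :=
  { w | ∃ i j k l : ℕ, bay a b i j ∈ X ∧ bay a b k l ∈ Y ∧ (j + k) % n = r ∧
        w = bay a b i l }

/-- iterated composition `X ∘_{r₁} X₁ ∘_{r₂} ⋯ ∘_{r_k} X_k` -/
def compList (a b : A) (n : ℕ) (X : Set (FreeMonoid A))
    (rest : List (ℕ × Set (FreeMonoid A))) : Set (FreeMonoid A) :=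
  rest.foldl (fun acc p => comp a b n p.1 acc p.2) X

/-- a compatible set of `n`-cbc -/
def Compatible (a b : A) (n : ℕ) (E : Set (Set (FreeMonoid A))) : Prop :=
  ∀ X ∈ E, ∀ rest : List (ℕ × Set (FreeMonoid A)),
    (∀ p ∈ rest, p.1 < n ∧ p.2 ∈ E) → IsCbc a b n (compList a b n X rest)

/-- a stable set of `n`-cbc -/
def StableSet (a b : A) (n : ℕ) (S : Set (Set (FreeMonoid A))) : Prop :=
  (∀ X ∈ S, IsCbc a b n X) ∧ ∀ X ∈ S, ∀ Y ∈ S, ∀ r < n, comp a b n r X Y ∈ S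

/-- `E^∘`, the smallest stable set containing `E` -/
def stableClosure (a b : A) (n : ℕ) (E : Set (Set (FreeMonoid A))) :
    Set (Set (FreeMonoid A)) :=
  ⋂₀ { S | StableSet a b n S ∧ E ⊆ S }

/-- `(P,Q)` is a border of the `n`-cbc `X` : the map
`P × X × Q → (ZMod n)²`, `(p, a^i b a^j, q) ↦ (p + i, j + q)` is a bijection. -/
def IsBorder (a b : A) (n : ℕ) (P Q : Set ℤ) (X : Set (FreeMonoid A)) : Prop :=
  ∀ c : ZMod n × ZMod n, ∃! t : ℤ × (ℕ × ℕ) × ℤ,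
    t.1 ∈ P ∧ bay a b t.2.1.1 t.2.1.2 ∈ X ∧ t.2.2 ∈ Q ∧
    (t.1 : ZMod n) + (t.2.1.1 : ZMod n) = c.1 ∧
    (t.2.1.2 : ZMod n) + (t.2.2 : ZMod n) = c.2

/-- `(P,Q)` is a border of every element of `E` -/
def BordersFamily (a b : A) (n : ℕ) (P Q : Set ℤ)
    (E : Set (Set (FreeMonoid A))) : Prop :=
  ∀ X ∈ E, IsBorder a b n P Q X

def toZ (S : Set ℕ) : Set ℤ := (fun i : ℕ => (i : ℤ)) '' S

def toZModN (n : ℕ) (S : Set ℕ) : Set (ZMod n) := (fun i : ℕ => (i : ZMod n)) '' S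

def toZModZ (n : ℕ) (S : Set ℤ) : Set (ZMod n) := (fun i : ℤ => (i : ZMod n)) '' S

/-- `(P,Q)` is a factorization of size `n` -/
def IsFactorization (n : ℕ) (P Q : Set (ZMod n)) : Prop :=
  ∀ c : ZMod n, ∃! pq : ZMod n × ZMod n, pq.1 ∈ P ∧ pq.2 ∈ Q ∧ pq.1 + pq.2 = c

/-- `L_k^n(Y)` -/
def Lset (a b : A) (n : ℕ) (Y : Set (FreeMonoid A)) (k : ℕ) : Set ℕ :=
  { i | ∃ i' j' : ℕ, bay a b i' j' ∈ Y ∧ i' % n = i ∧ j' % n = k }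

/-- `R_k^n(Y)` -/
def Rset (a b : A) (n : ℕ) (Y : Set (FreeMonoid A)) (k : ℕ) : Set ℕ :=
  { j | ∃ i' j' : ℕ, bay a b i' j' ∈ Y ∧ i' % n = k ∧ j' % n = j }

/-- `L(Y)` -/
def Lfull (a b : A) (n : ℕ) (Y : Set (FreeMonoid A)) : Set ℕ :=
  { i | ∃ i' j' : ℕ, bay a b i' j' ∈ Y ∧ i' % n = i }

/-- `R(Y)` -/
def Rfam (a b : A) (n : ℕ) (Y : Set (FreeMonoid A)) : Set (Set ℕ) :=
  { R | ∃ k ∈ Lfull a b n Y, R = Rset a b n Y k }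

/-- the `n`-cbc `X` borders the set `E` -/
def CbcBorders (a b : A) (n : ℕ) (X : Set (FreeMonoid A))
    (E : Set (Set (FreeMonoid A))) : Prop :=
  ∀ R ∈ Rfam a b n X,
    IsFactorization n (toZModN n R) (toZModN n (Lfull a b n X)) ∧
    BordersFamily a b n (toZ R) (toZ (Lfull a b n X)) E

/-- `R_k^n(a^P X)` -/
def RsetShift (a b : A) (n : ℕ) (P : Set ℤ) (X : Set (FreeMonoid A)) (k : ℕ) :
    Set ℕ :=
  { j | j < n ∧ ∃ (p : ℤ) (i' j' : ℕ), p ∈ P ∧ bay a b i' j' ∈ X ∧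
        ((p + (i' : ℤ) : ℤ) : ZMod n) = (k : ZMod n) ∧ j' % n = j }

/-- `L_k^n(Y a^Q)` -/
def LsetShift (a b : A) (n : ℕ) (Y : Set (FreeMonoid A)) (Q : Set ℤ) (k : ℕ) :
    Set ℕ :=
  { i | i < n ∧ ∃ (i' j' : ℕ) (q : ℤ), q ∈ Q ∧ bay a b i' j' ∈ Y ∧
        i' % n = i ∧ (((j' : ℤ) + q : ℤ) : ZMod n) = (k : ZMod n) }

/-- `H_t(X)`, for `X ⊆ { a^i b a^j : i, j ∈ [n) }` -/
def Hfam (a b : A) (n t : ℕ) (X : Set (FreeMonoid A)) : Set (Set (FreeMonoid A)) :=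
  { Y | ∃ f : ℕ → ℕ → ℕ → ℕ, (∀ i j s, f i j s < t) ∧
      Y = { w | ∃ i j s : ℕ, bay a b i j ∈ X ∧ s < t ∧
                w = bay a b (i + f i j s * n) (j + s * n) } }

/-- `E' ∈ ℋ_t(E)` -/
def HfamSet (a b : A) (n t : ℕ) (E E' : Set (Set (FreeMonoid A))) : Prop :=
  (∀ Y ∈ E', ∃ X ∈ E, Y ∈ Hfam a b n t X) ∧
  (∀ X ∈ E, ∃ Y ∈ E', Y ∈ Hfam a b n t X)

/-- the dual `X̃` of a bayonet code -/
def dual (a b : A) (X : Set (FreeMonoid A)) : Set (FreeMonoid A) :=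
  { w | ∃ i j : ℕ, bay a b i j ∈ X ∧ w = bay a b j i }

/-- a set `E` of `n`-cbc is of Hajós -/
def IsHajos (a b : A) (n : ℕ) (E : Set (Set (FreeMonoid A))) : Prop :=
  ∃ (k : ℕ) (ts : ℕ → ℕ) (Ys : ℕ → Set (FreeMonoid A)),
    (∀ i, 1 ≤ i → i ≤ k → 1 < ts i) ∧
    (∏ i ∈ Finset.Icc 1 k, ts i) = n ∧
    Ys 0 = {FreeMonoid.of b} ∧
    (∀ i, i ≤ k - 1 → IsBayonetCode a b (Ys i)) ∧
    (∀ i, 1 ≤ i → i ≤ k - 1 →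
      dual a b (Ys i) ∈ Hfam a b (∏ j ∈ Finset.Icc 1 (i - 1), ts j) (ts i) (Ys (i - 1))) ∧
    (if k = 0 then ∀ Y ∈ E, Y = ({FreeMonoid.of b} : Set (FreeMonoid A))
     else
       (∀ Y ∈ E, Y ∈ Hfam a b (∏ j ∈ Finset.Icc 1 (k - 1), ts j) (ts k) (Ys (k - 1))) ∨
       (∀ Y ∈ E, dual a b Y ∈ Hfam a b (∏ j ∈ Finset.Icc 1 (k - 1), ts j) (ts k) (Ys (k - 1))))

/-- a Krasner factorization of size `n` -/
def IsKrasner (n : ℕ) (P Q : Set ℕ) : Prop :=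
  P.Finite ∧ Q.Finite ∧ P.ncard * Q.ncard = n ∧ ∀ k < n, ∃ p ∈ P, ∃ q ∈ Q, k = p + q

/-- `C_M(ω) = { a^{i mod n} b a^{j mod n} : a^i ω a^j ∈ M^* }` -/
def Cword (a b : A) (n : ℕ) (M : Set (FreeMonoid A)) (ω : FreeMonoid A) :
    Set (FreeMonoid A) :=
  { w | ∃ i j : ℕ, apow a i * ω * apow a j ∈ Submonoid.closure M ∧
        w = bay a b (i % n) (j % n) }

/-- `φ_{d₁,d₂}(X)` -/
def phiMap (a b : A) (n : ℕ) (d₁ d₂ : ℤ) (X : Set (FreeMonoid A)) :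
    Set (FreeMonoid A) :=
  { w | ∃ i j : ℕ, bay a b i j ∈ X ∧
      w = bay a b ((d₁ * (i : ℤ)) % (n : ℤ)).toNat ((d₂ * (j : ℤ)) % (n : ℤ)).toNat }



/-! ### Dilating one factor of a factorization of `ZMod n` -/

/-- Dilation by a prime. In the group algebra of `ZMod n` over `ZMod p`, let `S` be the weighted sum
of the `u x`, let `F` be the element of coefficients `f`, and `J` the sum of all group elements; the
hypothesis reads `S * F = J`. By Frobenius the dilated sum is `S ^ p`, and
`S ^ p * F = S ^ (p - 1) * J = (∑ w) ^ (p - 1) * J = J`. So the dilated convolution is `1` modulo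
`p`, hence at least `1` everywhere, and its total mass is that of the constant `1`. -/
lemma conv_prime {n : ℕ} [NeZero n] {ι : Type*} [Fintype ι] (p : ℕ) [hp : Fact p.Prime]
    (u : ι → ZMod n) (w : ι → ℕ) (f : ZMod n → ℕ)
    (h : ∀ r, ∑ x, w x * f (r - u x) = 1) (hw : ¬ p ∣ ∑ x, w x) :
    ∀ r, ∑ x, w x * f (r - p * u x) = 1 := by
  classical
  let S (v : ι → ZMod n) : AddMonoidAlgebra (ZMod p) (ZMod n) :=
    ∑ x, AddMonoidAlgebra.single (v x) (w x : ZMod p)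
  let F (g : ZMod n → ℕ) : AddMonoidAlgebra (ZMod p) (ZMod n) :=
    ∑ z, AddMonoidAlgebra.single z (g z : ZMod p)
  have hF (g : ZMod n → ℕ) (r : ZMod n) : (F g).coeff r = (g r : ZMod p) := by
    simp [F, AddMonoidAlgebra.coeff_sum, Finsupp.single_apply]
  have hSF (v : ι → ZMod n) (g : ZMod n → ℕ) (r : ZMod n) :
      (S v * F g).coeff r = ((∑ x, w x * g (r - v x) : ℕ) : ZMod p) := by
    simp only [S, Finset.sum_mul, AddMonoidAlgebra.coeff_sum, Finsupp.finsetSum_apply,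
      AddMonoidAlgebra.coeff_single_mul_apply, hF]
    push_cast
    exact Finset.sum_congr rfl fun x _ => by rw [neg_add_eq_sub]
  have h1 : S u * F f = F 1 := by
    ext r
    rw [hSF, hF, h]; simp
  have h2 : S u * F 1 = (∑ x, (w x : ZMod p)) • F 1 := by
    ext r
    rw [hSF, AddMonoidAlgebra.coeff_smul, Finsupp.smul_apply, hF]; simp
  have hpow : ∀ k : ℕ, S u ^ k * F 1 = (∑ x, (w x : ZMod p)) ^ k • F 1 := by
    intro k
    induction k with
    | zero => simp
    | succ k ih => rw [pow_succ, mul_assoc, h2, mul_smul_comm, ih, smul_smul, pow_succ']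
  have hfrob : S u ^ p = S (fun x => p * u x) := by
    have : CharP (AddMonoidAlgebra (ZMod p) (ZMod n)) p :=
      charP_of_injective_algebraMap
        (algebraMap (ZMod p) (AddMonoidAlgebra (ZMod p) (ZMod n))).injective p
    have := map_sum (frobenius (AddMonoidAlgebra (ZMod p) (ZMod n)) p)
      (fun x => AddMonoidAlgebra.single (u x) (w x : ZMod p)) Finset.univ
    simp only [frobenius_def, AddMonoidAlgebra.single_pow, ZMod.pow_card] at this
    simpa [S, nsmul_eq_mul] using this
  have h3 : S (fun x => p * u x) * F f = F 1 := by
    have hsplit : S u ^ p = S u ^ (p - 1) * S u := by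
      rw [← pow_succ, Nat.sub_add_cancel hp.out.one_le]
    rw [← hfrob, hsplit, mul_assoc, h1, hpow,
      ZMod.pow_card_sub_one_eq_one, one_smul]
    intro h0
    apply hw
    rw [← ZMod.natCast_eq_zero_iff]
    simpa using h0
  have hpos : ∀ r, 1 ≤ ∑ x, w x * f (r - p * u x) := by
    intro r
    rw [Nat.one_le_iff_ne_zero]
    intro h0
    have := hSF (fun x => p * u x) f r
    rw [h3, hF, h0] at this
    simp at this
  have htot (v : ι → ZMod n) :
      ∑ r, ∑ x, w x * f (r - v x) = (∑ x, w x) * ∑ z, f z := by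
    rw [Finset.sum_comm, Finset.sum_mul]
    refine Finset.sum_congr rfl fun x _ => ?_
    rw [← Finset.mul_sum]
    congr 1
    exact Fintype.sum_equiv (Equiv.subRight (v x)) _ _ fun _ => rfl
  have heq : ∑ r : ZMod n, 1 = ∑ r, ∑ x, w x * f (r - p * u x) := by
    rw [htot, ← htot u]
    exact Finset.sum_congr rfl fun r _ => (h r).symm
  intro r
  exact ((Finset.sum_eq_sum_iff_of_le fun r _ => hpos r).1 heq r (Finset.mem_univ r)).symm

lemma conv_nat {n : ℕ} [NeZero n] {ι : Type*} [Fintype ι] (d : ℕ) (hd0 : d ≠ 0)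
    (u : ι → ZMod n) (w : ι → ℕ) (f : ZMod n → ℕ)
    (h : ∀ r, ∑ x, w x * f (r - u x) = 1) (hw : d.Coprime (∑ x, w x)) :
    ∀ r, ∑ x, w x * f (r - d * u x) = 1 := by
  induction d using induction_on_primes generalizing u with
  | zero => exact absurd rfl hd0
  | one => simpa using h
  | prime_mul p m hp ih =>
    have : Fact p.Prime := ⟨hp⟩
    have hc := Nat.coprime_mul_iff_left.1 hw
    have h1 := conv_prime p u w f h ((Nat.Prime.coprime_iff_not_dvd hp).1 hc.1)
    have h2 := ih (by rintro rfl; simp at hd0) _ h1 hc.2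
    intro r
    rw [← h2 r]
    refine Finset.sum_congr rfl fun x _ => ?_
    congr 2
    push_cast; ring

/-- Dilation by an integer `d` coprime to the mass of one factor (Tijdeman's theorem, in weighted
form): `d` may be replaced by a positive representative modulo `n`, since the mass divides `n`. -/
lemma conv_int {n : ℕ} [NeZero n] {ι : Type*} [Fintype ι] (d : ℤ)
    (u : ι → ZMod n) (w : ι → ℕ) (f : ZMod n → ℕ)
    (h : ∀ r, ∑ x, w x * f (r - u x) = 1) (hw : IsCoprime d ((∑ x, w x : ℕ) : ℤ))
    (hdvd : (∑ x, w x) ∣ n) :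
    ∀ r, ∑ x, w x * f (r - d * u x) = 1 := by
  have hn : (0 : ℤ) < n := by exact_mod_cast Nat.pos_of_ne_zero (NeZero.ne n)
  obtain ⟨e, he⟩ := Int.eq_ofNat_of_zero_le
    (show 0 ≤ d % n + n by have := Int.emod_nonneg d hn.ne'; omega)
  have hed : ((e : ℕ) : ZMod n) = (d : ZMod n) := by
    have : ((e : ℤ) : ZMod n) = ((d % n + n : ℤ) : ZMod n) := by rw [he]
    simpa using this
  have he0 : e ≠ 0 := by
    rintro rfl
    have := Int.emod_nonneg d hn.ne'
    simp at he; omega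
  have hc : e.Coprime (∑ x, w x) := by
    rw [← Nat.isCoprime_iff_coprime]
    obtain ⟨c, hc⟩ := hdvd
    have h1 : (e : ℤ) = d + (∑ x, w x : ℕ) * (c * (1 - d / n)) := by
      have h2 : (n : ℤ) = (∑ x, w x : ℕ) * c := by exact_mod_cast hc
      have h3 := Int.emod_add_mul_ediv d n
      rw [← mul_assoc, ← h2]
      linarith
    rw [h1]
    exact hw.add_mul_left_left _
  simpa [hed] using conv_nat e he0 u w f h hc


/-! ### Matrices, pairings and contexts -/

/-- Matrices of multiplicities of pairs of residues `(i mod n, j mod n)`. -/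
abbrev Mat (n : ℕ) := Matrix (ZMod n) (ZMod n) ℕ

/-- The matrix with rows `j ↦ M (r - j)`, so that `N * shift r M` is the composition `∘_r` with
multiplicities: `(N * shift r M) i l = ∑ j, N i j * M (r - j) l`. -/
def shift {n : ℕ} (r : ZMod n) (M : Mat n) : Mat n := Matrix.of fun j l => M (r - j) l

/-- The number, with multiplicities, of triples with `p + k = r` and `l + q = s`, where `p` is weighted
by `f`, `(k, l)` by `M` and `q` by `u`. -/
def pairing {n : ℕ} [NeZero n] (f : ZMod n → ℕ) (M : Mat n) (u : ZMod n → ℕ)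
    (r s : ZMod n) : ℕ :=
  ∑ k, ∑ l, f (r - k) * M k l * u (s - l)

/-- The right weight obtained by putting `M` in front of `u`, the two meeting at the residue `s`. -/
def pull {n : ℕ} [NeZero n] (M : Mat n) (s : ZMod n) (u : ZMod n → ℕ) : ZMod n → ℕ :=
  fun k => ∑ l, M k l * u (s - l)

/-- The push-forward of `M` along `(i, j) ↦ (d₁ * i, d₂ * j)`. Multiplicities are kept, as `d₁` and
`d₂` need not be invertible modulo `n`. -/
def dil {n : ℕ} [NeZero n] (d₁ d₂ : ℤ) (M : Mat n) : Mat n :=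
  Matrix.of fun k l => ∑ i, ∑ j, if (d₁ * i = k ∧ d₂ * j = l) then M i j else 0

/-- Left weights obtained from `f₀` by appending letters of `𝓜` on the right. -/
inductive LCtx {n : ℕ} [NeZero n] (𝓜 : Set (Mat n)) (f₀ : ZMod n → ℕ) :
    (ZMod n → ℕ) → Prop
  | base : LCtx 𝓜 f₀ f₀
  | step {f : ZMod n → ℕ} (r : ZMod n) {M : Mat n} :
      LCtx 𝓜 f₀ f → M ∈ 𝓜 → LCtx 𝓜 f₀ (Matrix.vecMul f (shift r M))

/-- Right weights obtained from `u₀` by prepending letters of `𝓜` on the left. -/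
inductive RCtx {n : ℕ} [NeZero n] (𝓜 : Set (Mat n)) (u₀ : ZMod n → ℕ) :
    (ZMod n → ℕ) → Prop
  | base : RCtx 𝓜 u₀ u₀
  | step {u : ZMod n → ℕ} (s : ZMod n) {M : Mat n} :
      RCtx 𝓜 u₀ u → M ∈ 𝓜 → RCtx 𝓜 u₀ (pull M s u)

/-- Iterated compositions, with multiplicities, of letters of `𝓜`. -/
inductive Prods {n : ℕ} [NeZero n] (𝓜 : Set (Mat n)) : Mat n → Prop
  | base {M : Mat n} : M ∈ 𝓜 → Prods 𝓜 M
  | step {N M : Mat n} (r : ZMod n) : Prods 𝓜 N → M ∈ 𝓜 → Prods 𝓜 (N * shift r M)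

section Matrices

variable {n : ℕ} [NeZero n]

lemma shift_mul (r : ZMod n) (M N : Mat n) : shift r (M * N) = shift r M * N := by
  ext i j
  simp [shift, Matrix.mul_apply]

/-- A letter between `N` and the right weight may be counted with either of them. -/
lemma pairing_pull (f : ZMod n → ℕ) (N M : Mat n) (u : ZMod n → ℕ) (r s t : ZMod n) :
    pairing f N (pull M t u) r s = pairing f (N * shift s M) u r t := by
  unfold pairing pull
  refine Finset.sum_congr rfl fun k _ => ?_
  simp only [Matrix.mul_apply, shift, Matrix.of_apply, Finset.mul_sum, Finset.sum_mul]
  rw [Finset.sum_comm]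
  refine Finset.sum_congr rfl fun l _ => Finset.sum_congr rfl fun m _ => ?_
  ring

lemma pairing_eq_sum_vecMul (f : ZMod n → ℕ) (M : Mat n) (u : ZMod n → ℕ) (r s : ZMod n) :
    pairing f M u r s = ∑ l, Matrix.vecMul f (shift r M) l * u (s - l) := by
  simp only [pairing, Matrix.vecMul, dotProduct, shift, Matrix.of_apply, Finset.sum_mul]
  rw [Finset.sum_comm]
  refine Finset.sum_congr rfl fun l _ => ?_
  exact Fintype.sum_equiv (Equiv.subLeft r) _ _ fun k => by simp

/-- A letter may be moved from the left context across to the right one. -/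
lemma pairing_vecMul (f : ZMod n → ℕ) (N M : Mat n) (u : ZMod n → ℕ) (r s t : ZMod n) :
    pairing (Matrix.vecMul f (shift t N)) M u r s = pairing f N (pull M s u) t r := by
  rw [pairing_pull, pairing_eq_sum_vecMul, pairing_eq_sum_vecMul, Matrix.vecMul_vecMul,
    shift_mul]

lemma pairing_dil (d₁ d₂ : ℤ) (f : ZMod n → ℕ) (M : Mat n) (u : ZMod n → ℕ)
    (r s : ZMod n) :
    pairing f (dil d₁ d₂ M) u r s
      = ∑ k, ∑ l, f (r - d₁ * k) * M k l * u (s - d₂ * l) := by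
  classical
  simp only [pairing, dil, Matrix.of_apply, Finset.mul_sum, Finset.sum_mul]
  simp_rw [← Fintype.sum_prod_type' (f := fun i j : ZMod n => _)]
  rw [Finset.sum_comm]
  refine Finset.sum_congr rfl fun x _ => ?_
  rw [Finset.sum_eq_single ((d₁ : ZMod n) * x.1, (d₂ : ZMod n) * x.2)]
  · simp
  · intro y _ hy
    rw [if_neg]
    · simp
    · rintro ⟨h1, h2⟩
      exact hy (Prod.ext h1.symm h2.symm)
  · simp

lemma sum_shift (f : ZMod n → ℕ) (k : ZMod n) : ∑ r, f (r - k) = ∑ r, f r :=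
  Fintype.sum_equiv (Equiv.subRight k) _ _ fun _ => rfl

lemma sum_pairing (f : ZMod n → ℕ) (M : Mat n) (u : ZMod n → ℕ) (s : ZMod n) :
    ∑ r, pairing f M u r s = (∑ r, f r) * ∑ k, ∑ l, M k l * u (s - l) := by
  simp only [pairing]
  rw [Finset.sum_comm, Finset.mul_sum]
  refine Finset.sum_congr rfl fun k _ => ?_
  rw [Finset.sum_comm, Finset.mul_sum]
  refine Finset.sum_congr rfl fun l _ => ?_
  rw [← sum_shift f k, Finset.sum_mul]
  exact Finset.sum_congr rfl fun r _ => by ring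

lemma sum_sum_pairing (f : ZMod n → ℕ) (M : Mat n) (u : ZMod n → ℕ) :
    ∑ s, ∑ r, pairing f M u r s = (∑ r, f r) * (∑ k, ∑ l, M k l) * ∑ s, u s := by
  simp only [sum_pairing]
  rw [← Finset.mul_sum, mul_assoc]
  congr 1
  rw [Finset.sum_comm, Finset.sum_mul]
  refine Finset.sum_congr rfl fun k _ => ?_
  rw [Finset.sum_comm, Finset.sum_mul]
  refine Finset.sum_congr rfl fun l _ => ?_
  rw [← Finset.mul_sum, sum_shift]

lemma sum_mul_sum_of_pairing {f : ZMod n → ℕ} {M : Mat n} {u : ZMod n → ℕ}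
    (h : ∀ r s, pairing f M u r s = 1) (hM : ∑ k, ∑ l, M k l = n) :
    (∑ r, f r) * ∑ s, u s = n := by
  have h1 := sum_sum_pairing f M u
  simp only [h, hM, Finset.sum_const, Finset.card_univ, ZMod.card, smul_eq_mul, mul_one] at h1
  have hn : 0 < n := Nat.pos_of_ne_zero (NeZero.ne n)
  apply Nat.eq_of_mul_eq_mul_right hn
  rw [h1]; ring

lemma sum_of_pairing {f : ZMod n → ℕ} {M : Mat n} {u : ZMod n → ℕ}
    (h : ∀ r s, pairing f M u r s = 1)
    (hpos : (∑ r, f r) * ∑ s, u s = n) :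
    (∑ k, ∑ l, M k l) = n := by
  have h1 := sum_sum_pairing f M u
  simp only [h, Finset.sum_const, Finset.card_univ, ZMod.card, smul_eq_mul, mul_one] at h1
  have hn : 0 < n := Nat.pos_of_ne_zero (NeZero.ne n)
  apply Nat.eq_of_mul_eq_mul_right hn
  calc (∑ k, ∑ l, M k l) * n = (∑ k, ∑ l, M k l) * ((∑ r, f r) * ∑ s, u s) :=
        congrArg _ hpos.symm
    _ = (∑ r, f r) * (∑ k, ∑ l, M k l) * ∑ s, u s := by ring
    _ = n * n := h1.symm

/-- If `M` pairs to `1` with `f` and `u` at all residues, so does its dilation. Both coordinates are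
treated in turn by `conv_int`, the masses of the factors being forced by `hM`. -/
theorem pairing_dil_eq_one {f : ZMod n → ℕ} {M : Mat n} {u : ZMod n → ℕ} {d₁ d₂ : ℤ}
    (h : ∀ r s, pairing f M u r s = 1) (hM : ∑ k, ∑ l, M k l = n)
    (hd₁ : IsCoprime d₁ ((∑ s, u s : ℕ) : ℤ)) (hd₂ : IsCoprime d₂ ((∑ r, f r : ℕ) : ℤ)) :
    ∀ r s, pairing f (dil d₁ d₂ M) u r s = 1 := by
  have hn : 0 < n := Nat.pos_of_ne_zero (NeZero.ne n)
  have hfu := sum_mul_sum_of_pairing h hM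
  have hf0 : 0 < ∑ r, f r := Nat.pos_of_ne_zero fun h0 => by rw [h0] at hfu; omega
  have hu0 : 0 < ∑ r, u r := Nat.pos_of_ne_zero fun h0 => by rw [h0] at hfu; omega
  -- dilate the left coordinate, one column residue `s` at a time
  have step₁ : ∀ s r, ∑ x : ZMod n × ZMod n,
      (M x.1 x.2 * u (s - x.2)) * f (r - d₁ * x.1) = 1 := by
    intro s
    have hw : ∑ x : ZMod n × ZMod n, M x.1 x.2 * u (s - x.2) = ∑ s, u s := by
      apply Nat.eq_of_mul_eq_mul_left hf0
      rw [hfu, Fintype.sum_prod_type]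
      exact (sum_pairing f M u s).symm.trans (by simp [h])
    apply conv_int d₁ (fun x => x.1) (fun x : ZMod n × ZMod n => M x.1 x.2 * u (s - x.2)) f
    · intro r
      rw [← h r s, pairing, Fintype.sum_prod_type]
      exact Finset.sum_congr rfl fun k _ => Finset.sum_congr rfl fun l _ => by ring
    · rwa [hw]
    · rw [hw]; exact Dvd.intro_left _ hfu
  -- then the right one, one row residue `r` at a time
  have step₂ : ∀ r s, ∑ x : ZMod n × ZMod n,
      (M x.1 x.2 * f (r - d₁ * x.1)) * u (s - d₂ * x.2) = 1 := by
    intro r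
    have h1 : ∀ s, ∑ x : ZMod n × ZMod n,
        (M x.1 x.2 * f (r - d₁ * x.1)) * u (s - x.2) = 1 := by
      intro s
      rw [← step₁ s r]
      exact Finset.sum_congr rfl fun x _ => by ring
    have hw : ∑ x : ZMod n × ZMod n, M x.1 x.2 * f (r - d₁ * x.1) = ∑ s, f s := by
      apply Nat.eq_of_mul_eq_mul_right hu0
      rw [hfu, Finset.sum_mul]
      calc _ = ∑ s, ∑ x : ZMod n × ZMod n,
            (M x.1 x.2 * f (r - d₁ * x.1)) * u (s - x.2) := by
            rw [Finset.sum_comm]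
            refine Finset.sum_congr rfl fun x _ => ?_
            rw [← Finset.mul_sum, sum_shift]
        _ = n := by simp [h1]
    apply conv_int d₂ (fun x => x.2)
      (fun x : ZMod n × ZMod n => M x.1 x.2 * f (r - d₁ * x.1)) u h1
    · rwa [hw]
    · rw [hw]; exact Dvd.intro _ hfu
  intro r s
  rw [pairing_dil, ← step₂ r s, Fintype.sum_prod_type]
  exact Finset.sum_congr rfl fun k _ => Finset.sum_congr rfl fun l _ => by ring

section Contexts

variable {𝓜 : Set (Mat n)} {f₀ u₀ : ZMod n → ℕ}

lemma pairing_prods_rctx (H : ∀ N, Prods 𝓜 N → ∀ r s, pairing f₀ N u₀ r s = 1)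
    {u : ZMod n → ℕ} (hu : RCtx 𝓜 u₀ u) :
    ∀ N, Prods 𝓜 N → ∀ r s, pairing f₀ N u r s = 1 := by
  induction hu with
  | base => exact H
  | step t _ hM ih =>
    intro N hN r s
    rw [pairing_pull]
    exact ih _ (hN.step s hM) r t

/-- Letters of `𝓜` can be replaced by the dilation of `M₀`, one occurrence at a time from left to
right. The left context may use the dilated letter while the right context only uses `𝓜`; a letter
appended to the left context is moved to the right context if it lies in `𝓜`, and if it is the
dilated one it is treated as the middle letter, where `pairing_dil_eq_one` applies. -/
theorem pairing_lctx_rctx (H : ∀ N, Prods 𝓜 N → ∀ r s, pairing f₀ N u₀ r s = 1)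
    (hsum : ∀ M ∈ 𝓜, ∑ k, ∑ l, M k l = n) {M₀ : Mat n} (hM₀ : M₀ ∈ 𝓜) {d₁ d₂ : ℤ}
    (hd₁ : IsCoprime d₁ ((∑ s, u₀ s : ℕ) : ℤ)) (hd₂ : IsCoprime d₂ ((∑ r, f₀ r : ℕ) : ℤ))
    {f : ZMod n → ℕ} (hf : LCtx (insert (dil d₁ d₂ M₀) 𝓜) f₀ f) :
    ∀ u, RCtx 𝓜 u₀ u → ∀ M ∈ insert (dil d₁ d₂ M₀) 𝓜, ∀ r s, pairing f M u r s = 1 := by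
  have hn : 0 < n := Nat.pos_of_ne_zero (NeZero.ne n)
  have h₀ := sum_mul_sum_of_pairing (H _ (.base hM₀)) (hsum _ hM₀)
  have hf0 : 0 < ∑ r, f₀ r := Nat.pos_of_ne_zero fun h0 => by rw [h0] at h₀; omega
  have hu0 : 0 < ∑ r, u₀ r := Nat.pos_of_ne_zero fun h0 => by rw [h0] at h₀; omega
  have hu_sum : ∀ u, RCtx 𝓜 u₀ u → ∑ s, u s = ∑ s, u₀ s := fun u hu => by
    apply Nat.eq_of_mul_eq_mul_left hf0
    rw [h₀, sum_mul_sum_of_pairing (pairing_prods_rctx H hu _ (.base hM₀)) (hsum _ hM₀)]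
  -- a factor of `𝓜` may be exchanged for the dilated matrix between `f` and `u`
  have key : ∀ f : ZMod n → ℕ, (∀ u, RCtx 𝓜 u₀ u → ∀ M ∈ 𝓜, ∀ r s, pairing f M u r s = 1) →
      ∀ u, RCtx 𝓜 u₀ u → ∀ M ∈ insert (dil d₁ d₂ M₀) 𝓜, ∀ r s, pairing f M u r s = 1 := by
    intro f hfM u hu M hM
    rcases hM with rfl | hM
    · have hf_sum : ∑ s, f s = ∑ s, f₀ s := by
        apply Nat.eq_of_mul_eq_mul_right hu0
        rw [h₀, sum_mul_sum_of_pairing (hfM _ .base _ hM₀) (hsum _ hM₀)]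
      refine pairing_dil_eq_one (hfM u hu M₀ hM₀) (hsum _ hM₀) ?_ ?_
      · rwa [hu_sum u hu]
      · rwa [hf_sum]
    · exact hfM u hu M hM
  induction hf with
  | base => exact key _ fun u hu M hM => pairing_prods_rctx H hu M (.base hM)
  | step t _ hN ih =>
    refine key _ fun u hu M hM r s => ?_
    rw [pairing_vecMul]
    exact ih _ (hu.step s hM) _ hN t r

lemma LCtx.vecMul_prods {f : ZMod n → ℕ} (hf : LCtx 𝓜 f₀ f) {N : Mat n} (hN : Prods 𝓜 N)
    (r : ZMod n) : LCtx 𝓜 f₀ (Matrix.vecMul f (shift r N)) := by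
  induction hN generalizing r with
  | base hM => exact hf.step r hM
  | step t _ hM ih =>
    rw [shift_mul, ← Matrix.vecMul_vecMul]
    exact (ih r).step t hM

lemma pairing_lctx_prods
    (H : ∀ f, LCtx 𝓜 f₀ f → ∀ M ∈ 𝓜, ∀ r s, pairing f M u₀ r s = 1)
    {f : ZMod n → ℕ} (hf : LCtx 𝓜 f₀ f) {N : Mat n} (hN : Prods 𝓜 N) :
    ∀ r s, pairing f N u₀ r s = 1 := by
  cases hN with
  | base hM => exact H f hf _ hM
  | step t hN hM =>
    intro r s
    rw [pairing_eq_sum_vecMul, shift_mul, ← Matrix.vecMul_vecMul, ← pairing_eq_sum_vecMul]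
    exact H _ (hf.vecMul_prods hN r) _ hM t s

lemma vecMul_le_one {f u : ZMod n → ℕ} {N : Mat n} (h : ∀ r s, pairing f N u r s = 1)
    (r l : ZMod n) : Matrix.vecMul f (shift r N) l ≤ 1 := by
  obtain ⟨q, hq⟩ : ∃ q, u q ≠ 0 := by
    by_contra! h0
    have := h 0 0
    simp [pairing, h0] at this
  have h1 := h r (l + q)
  rw [pairing_eq_sum_vecMul] at h1
  have h2 := Finset.single_le_sum
    (f := fun m => Matrix.vecMul f (shift r N) m * u (l + q - m))
    (fun _ _ => Nat.zero_le _) (Finset.mem_univ l)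
  rw [h1] at h2
  simp only [add_sub_cancel_left] at h2
  exact (Nat.le_mul_of_pos_right _ (Nat.pos_of_ne_zero hq)).trans h2

lemma le_one_of_pairing {f u : ZMod n → ℕ} {N : Mat n} (h : ∀ r s, pairing f N u r s = 1)
    (k l : ZMod n) : N k l ≤ 1 := by
  obtain ⟨p, hp⟩ : ∃ p, f p ≠ 0 := by
    by_contra! h0
    have := h 0 0
    simp [pairing, h0] at this
  have h1 := vecMul_le_one h (k + p) l
  have h2 := Finset.single_le_sum
    (f := fun m => f m * shift (k + p) N m l)
    (fun _ _ => Nat.zero_le _) (Finset.mem_univ p)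
  simp only [shift, Matrix.of_apply, add_sub_cancel_right] at h2
  exact ((Nat.le_mul_of_pos_left _ (Nat.pos_of_ne_zero hp)).trans h2).trans h1

end Contexts

end Matrices

/-! ### Bayonet words -/

section Words

lemma apow_zero (a : A) : apow a 0 = 1 := pow_zero _

lemma apow_succ (a : A) (i : ℕ) : apow a (i + 1) = FreeMonoid.of a * apow a i := pow_succ' _ _

lemma apow_add (a : A) (i j : ℕ) : apow a (i + j) = apow a i * apow a j := pow_add _ _ _

lemma of_mul_inj {x y : A} {u v : FreeMonoid A}
    (h : FreeMonoid.of x * u = FreeMonoid.of y * v) : x = y ∧ u = v := by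
  have h' : x :: FreeMonoid.toList u = y :: FreeMonoid.toList v := h
  exact ⟨(List.cons.inj h').1, FreeMonoid.toList.injective (List.cons.inj h').2⟩

lemma of_mul_ne_one {x : A} {u : FreeMonoid A} : FreeMonoid.of x * u ≠ 1 := by
  intro h
  have h' : x :: FreeMonoid.toList u = [] := h
  simp at h'

lemma apow_inj {a : A} {i j : ℕ} (h : apow a i = apow a j) : i = j := by
  induction i generalizing j with
  | zero =>
    cases j with
    | zero => rfl
    | succ j => rw [apow_succ, apow_zero] at h; exact absurd h.symm of_mul_ne_one
  | succ i ih =>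
    cases j with
    | zero => rw [apow_succ, apow_zero] at h; exact absurd h of_mul_ne_one
    | succ j => rw [apow_succ, apow_succ] at h; rw [ih (of_mul_inj h).2]

variable {a b : A}

lemma apow_b_inj (hab : a ≠ b) {i j : ℕ} {u v : FreeMonoid A}
    (h : apow a i * (FreeMonoid.of b * u) = apow a j * (FreeMonoid.of b * v)) :
    i = j ∧ u = v := by
  induction i generalizing j with
  | zero =>
    cases j with
    | zero => simp only [apow_zero, one_mul] at h; exact ⟨rfl, (of_mul_inj h).2⟩
    | succ j =>
      rw [apow_succ, apow_zero, one_mul, mul_assoc] at h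
      exact absurd (of_mul_inj h).1.symm hab
  | succ i ih =>
    cases j with
    | zero =>
      rw [apow_succ, apow_zero, one_mul, mul_assoc] at h
      exact absurd (of_mul_inj h).1 hab
    | succ j =>
      rw [apow_succ, apow_succ, mul_assoc, mul_assoc] at h
      have := ih (of_mul_inj h).2
      exact ⟨by rw [this.1], this.2⟩

lemma apow_ne_b (hab : a ≠ b) {i j : ℕ} {u : FreeMonoid A} :
    apow a i ≠ apow a j * (FreeMonoid.of b * u) := by
  intro h
  induction i generalizing j with
  | zero =>
    cases j with
    | zero => simp only [apow_zero, one_mul] at h; exact of_mul_ne_one h.symm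
    | succ j => rw [apow_succ, apow_zero, mul_assoc] at h; exact of_mul_ne_one h.symm
  | succ i ih =>
    cases j with
    | zero => rw [apow_succ, apow_zero, one_mul] at h; exact hab (of_mul_inj h).1
    | succ j =>
      rw [apow_succ, apow_succ, mul_assoc] at h
      exact ih (of_mul_inj h).2

lemma apow_mul_bay_mul (j i k : ℕ) (u : FreeMonoid A) :
    apow a j * (bay a b i k * u) = apow a (j + i) * (FreeMonoid.of b * (apow a k * u)) := by
  simp only [bay, apow_add, mul_assoc]

lemma bay_inj (hab : a ≠ b) {i j k l : ℕ} (h : bay a b i j = bay a b k l) :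
    i = k ∧ j = l := by
  simp only [bay, mul_assoc] at h
  exact ⟨(apow_b_inj hab h).1, apow_inj (apow_b_inj hab h).2⟩

/-! ### Sets of bayonet words encoded by matrices -/

variable {n : ℕ} [NeZero n]

/-- The set of words `a^k b a^l`, `k, l < n`, whose exponents index a nonzero entry of `N`. -/
def wset (a b : A) (N : Mat n) : Set (FreeMonoid A) :=
  { w | ∃ k l : ZMod n, N k l ≠ 0 ∧ w = bay a b k.val l.val }

open Classical in
/-- The indicator matrix of a set of bayonet words with exponents below `n`. -/
noncomputable def indMat (n : ℕ) (a b : A) (X : Set (FreeMonoid A)) : Mat n :=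
  Matrix.of fun k l => if bay a b k.val l.val ∈ X then 1 else 0

/-- The number of elements of `P` in each residue class modulo `n`. -/
def indVec (n : ℕ) (P : Finset ℤ) : ZMod n → ℕ :=
  fun z => ∑ p ∈ P, if (p : ZMod n) = z then 1 else 0

lemma sum_indVec (P : Finset ℤ) : ∑ z, indVec n P z = P.card := by
  simp only [indVec]
  rw [Finset.sum_comm]
  simp

lemma bay_mem_wset (hab : a ≠ b) {N : Mat n} {k l : ZMod n} :
    bay a b k.val l.val ∈ wset a b N ↔ N k l ≠ 0 := by
  constructor
  · rintro ⟨k', l', h, h'⟩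
    have := bay_inj hab h'
    rwa [ZMod.val_injective n this.1, ZMod.val_injective n this.2]
  · intro h
    exact ⟨k, l, h, rfl⟩

omit [NeZero n] in
lemma wset_indMat {X : Set (FreeMonoid A)} (hX : IsCbc a b n X) :
    wset a b (indMat n a b X) = X := by
  ext w
  constructor
  · rintro ⟨k, l, h, rfl⟩
    simpa [indMat] using h
  · intro hw
    obtain ⟨i, hi, j, hj, rfl⟩ := hX.1 w hw
    refine ⟨i, j, ?_, ?_⟩
    · simpa [indMat, ZMod.val_natCast, Nat.mod_eq_of_lt hi, Nat.mod_eq_of_lt hj] using hw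
    · simp [ZMod.val_natCast, Nat.mod_eq_of_lt hi, Nat.mod_eq_of_lt hj]

lemma mul_shift_ne_zero {N M : Mat n} {r i l : ZMod n} :
    (N * shift r M) i l ≠ 0 ↔ ∃ j, N i j ≠ 0 ∧ M (r - j) l ≠ 0 := by
  simp [Matrix.mul_apply, shift]

lemma comp_wset (hab : a ≠ b) (r : ZMod n) (N M : Mat n) :
    comp a b n r.val (wset a b N) (wset a b M) = wset a b (N * shift r M) := by
  ext w
  constructor
  · rintro ⟨i, j, k, l, ⟨i', j', hN, hN'⟩, ⟨k', l', hM, hM'⟩, hr, rfl⟩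
    obtain ⟨rfl, rfl⟩ := bay_inj hab hN'
    obtain ⟨rfl, rfl⟩ := bay_inj hab hM'
    refine ⟨i', l', mul_shift_ne_zero.2 ⟨j', hN, ?_⟩, rfl⟩
    rw [← ZMod.val_add] at hr
    rwa [← ZMod.val_injective n hr, add_sub_cancel_left]
  · rintro ⟨i, l, h, rfl⟩
    obtain ⟨j, hN, hM⟩ := mul_shift_ne_zero.1 h
    refine ⟨i.val, j.val, (r - j).val, l.val, ⟨i, j, hN, rfl⟩, ⟨_, l, hM, rfl⟩, ?_, rfl⟩
    rw [← ZMod.val_add, add_sub_cancel]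

lemma comp_wset' (hab : a ≠ b) {r : ℕ} (hr : r < n) (N M : Mat n) :
    comp a b n r (wset a b N) (wset a b M) = wset a b (N * shift (r : ZMod n) M) := by
  rw [← comp_wset hab, ZMod.val_natCast, Nat.mod_eq_of_lt hr]

lemma wset_dil (hab : a ≠ b) {X : Set (FreeMonoid A)} (hX : IsCbc a b n X) (d₁ d₂ : ℤ) :
    wset a b (dil d₁ d₂ (indMat n a b X)) = phiMap a b n d₁ d₂ X := by
  have hval : ∀ z : ℤ, (z % (n : ℤ)).toNat = (z : ZMod n).val := fun z => by
    rw [← ZMod.val_intCast, Int.toNat_natCast]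
  have hne : ∀ k l : ZMod n, dil d₁ d₂ (indMat n a b X) k l ≠ 0 ↔
      ∃ i j : ZMod n, (d₁ * i = k ∧ d₂ * j = l) ∧ bay a b i.val j.val ∈ X := by
    intro k l
    simp [dil, indMat, and_assoc]
  ext w
  constructor
  · rintro ⟨k, l, h, rfl⟩
    obtain ⟨i, j, ⟨rfl, rfl⟩, hij⟩ := (hne k l).1 h
    refine ⟨i.val, j.val, hij, ?_⟩
    rw [hval, hval]
    simp
  · rintro ⟨i, j, hij, rfl⟩
    obtain ⟨i', hi, j', hj, h⟩ := hX.1 _ hij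
    obtain ⟨rfl, rfl⟩ := bay_inj hab h
    refine ⟨d₁ * (i : ZMod n), d₂ * (j : ZMod n), (hne _ _).2 ⟨i, j, ⟨rfl, rfl⟩, ?_⟩, ?_⟩
    · simpa [ZMod.val_natCast, Nat.mod_eq_of_lt hi, Nat.mod_eq_of_lt hj] using hij
    · rw [hval, hval]
      simp

lemma ncard_wset (hab : a ≠ b) (N : Mat n) :
    (wset a b N).ncard = ∑ k, ∑ l, if N k l ≠ 0 then 1 else 0 := by
  have h : wset a b N = (fun x : ZMod n × ZMod n => bay a b x.1.val x.2.val) ''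
      ((Finset.univ.filter fun x : ZMod n × ZMod n => N x.1 x.2 ≠ 0 : Finset _) :
        Set (ZMod n × ZMod n)) := by
    ext w
    constructor
    · rintro ⟨k, l, h, rfl⟩
      exact ⟨(k, l), by simpa using h, rfl⟩
    · rintro ⟨x, h, rfl⟩
      exact ⟨x.1, x.2, by simpa using h, rfl⟩
  rw [h, Set.ncard_image_of_injective, Set.ncard_coe_finset, Finset.card_filter,
    Fintype.sum_prod_type]
  intro x y hxy
  have := bay_inj hab hxy
  exact Prod.ext (ZMod.val_injective n this.1) (ZMod.val_injective n this.2)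

lemma ncard_wset_of_le_one (hab : a ≠ b) {N : Mat n} (hN : ∀ k l, N k l ≤ 1) :
    (wset a b N).ncard = ∑ k, ∑ l, N k l := by
  rw [ncard_wset hab]
  refine Finset.sum_congr rfl fun k _ => Finset.sum_congr rfl fun l _ => ?_
  have := hN k l
  split_ifs <;> omega

lemma pairing_indVec (P Q : Finset ℤ) (N : Mat n) (r s : ZMod n) :
    pairing (indVec n P) N (indVec n Q) r s
      = ∑ x ∈ P ×ˢ Q, N (r - (x.1 : ZMod n)) (s - (x.2 : ZMod n)) := by
  rw [Finset.sum_product]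
  simp only [pairing, indVec, Finset.sum_mul]
  rw [Finset.sum_congr rfl fun k _ => Finset.sum_comm, Finset.sum_comm]
  refine Finset.sum_congr rfl fun p _ => ?_
  rw [Finset.sum_eq_single (r - (p : ZMod n))]
  · simp only [sub_sub_cancel, if_true, one_mul, Finset.mul_sum]
    rw [Finset.sum_comm]
    refine Finset.sum_congr rfl fun q _ => ?_
    rw [Finset.sum_eq_single (s - (q : ZMod n))]
    · simp
    · intro l _ hl
      rw [if_neg, mul_zero]
      rintro h
      exact hl (by rw [h]; simp)
    · simp
  · intro k _ hk
    refine Finset.sum_eq_zero fun l _ => ?_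
    rw [if_neg]
    · simp
    · rintro h
      exact hk (by rw [h]; simp)
  · simp

lemma isBorder_wset_iff (hab : a ≠ b) (P Q : Finset ℤ) {N : Mat n} (hN : ∀ k l, N k l ≤ 1) :
    IsBorder a b n P Q (wset a b N) ↔
      ∀ r s, pairing (indVec n P) N (indVec n Q) r s = 1 := by
  have hsum : ∀ r s, pairing (indVec n P) N (indVec n Q) r s = 1 ↔
      ∃! x : ℤ × ℤ, x ∈ (P ×ˢ Q).filter
        fun x => N (r - (x.1 : ZMod n)) (s - (x.2 : ZMod n)) ≠ 0 := by
    intro r s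
    rw [pairing_indVec, ← Finset.singleton_iff_unique_mem, ← Finset.card_eq_one,
      Finset.card_filter]
    apply Eq.congr_left
    refine Finset.sum_congr rfl fun x _ => ?_
    have := hN (r - (x.1 : ZMod n)) (s - (x.2 : ZMod n))
    split_ifs <;> omega
  rw [IsBorder, Prod.forall]
  refine forall_congr' fun r => forall_congr' fun s => ?_
  rw [hsum]
  constructor
  · rintro ⟨⟨p, ⟨i, j⟩, q⟩, ⟨hp, ⟨k, l, hkl, hbay⟩, hq, hr, hs⟩, huniq⟩
    obtain ⟨rfl, rfl⟩ := bay_inj hab hbay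
    simp only [ZMod.natCast_val, ZMod.cast_id', id] at hr hs
    refine ⟨(p, q), ?_, ?_⟩
    · simp only [Finset.mem_filter, Finset.mem_product]
      refine ⟨⟨hp, hq⟩, ?_⟩
      rwa [← hr, ← hs, add_sub_cancel_left, add_sub_cancel_right]
    · rintro ⟨p', q'⟩ h'
      simp only [Finset.mem_filter, Finset.mem_product] at h'
      have := huniq (p', ((r - (p' : ZMod n)).val, (s - (q' : ZMod n)).val), q')
        ⟨h'.1.1, (bay_mem_wset hab).2 h'.2, h'.1.2, by simp, by simp⟩
      simp only [Prod.mk.injEq] at this ⊢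
      exact ⟨this.1, this.2.2⟩
  · rintro ⟨⟨p, q⟩, hpq, huniq⟩
    simp only [Finset.mem_filter, Finset.mem_product] at hpq huniq
    refine ⟨(p, ((r - (p : ZMod n)).val, (s - (q : ZMod n)).val), q),
      ⟨hpq.1.1, (bay_mem_wset hab).2 hpq.2, hpq.1.2, by simp, by simp⟩, ?_⟩
    rintro ⟨p', ⟨i, j⟩, q'⟩ ⟨hp, ⟨k, l, hkl, hbay⟩, hq, hr, hs⟩
    obtain ⟨rfl, rfl⟩ := bay_inj hab hbay
    simp only [ZMod.natCast_val, ZMod.cast_id', id] at hr hs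
    have hk : r - (p' : ZMod n) = k := by rw [← hr, add_sub_cancel_left]
    have hl : s - (q' : ZMod n) = l := by rw [← hs, add_sub_cancel_right]
    have := huniq (p', q') ⟨⟨hp, hq⟩, by rwa [hk, hl]⟩
    simp only [Prod.mk.injEq] at this
    obtain ⟨rfl, rfl⟩ := this
    rw [hk, hl]

/-- Unique decoding. `𝒞` is a class of weights closed under appending `c`, with `0/1` values after each
step. The pending powers `a^j`, `a^j'` are what two decodings still have to read; a nonzero value
of `f` at `j` records that this state is reachable. Factors `a^n` are absorbed into the pending power,
hence the `j / n` copies in the conclusion. When two bayonets are read, both must meet their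
pending power in the same residue and, by induction, end in the same state, so the `0/1` bound
forces them to coincide. -/
lemma decode (hab : a ≠ b) {c : Mat n} (𝒞 : (ZMod n → ℕ) → Prop)
    (hstep : ∀ f, 𝒞 f → ∀ r, 𝒞 (Matrix.vecMul f (shift r c)))
    (hone : ∀ f, 𝒞 f → ∀ r l, Matrix.vecMul f (shift r c) l ≤ 1) (t : ℕ) :
    ∀ l m : List (FreeMonoid A), l.length + m.length ≤ t →
      (∀ w ∈ l, w ∈ insert (apow a n) (wset a b c)) →
      (∀ w ∈ m, w ∈ insert (apow a n) (wset a b c)) →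
      ∀ f, 𝒞 f → ∀ j j' : ℕ, f j ≠ 0 → f j' ≠ 0 →
        apow a j * l.prod = apow a j' * m.prod →
        j % n = j' % n ∧
          List.replicate (j / n) (apow a n) ++ l = List.replicate (j' / n) (apow a n) ++ m := by
  have hn : 0 < n := Nat.pos_of_ne_zero (NeZero.ne n)
  have habsorb : ∀ (j : ℕ) (l : List (FreeMonoid A)),
      List.replicate ((j + n) / n) (apow a n) ++ l
        = List.replicate (j / n) (apow a n) ++ apow a n :: l := by
    intro j l
    rw [Nat.add_div_right _ hn, List.replicate_succ']
    simp
  induction t with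
  | zero =>
    intro l m hlen _ _ f _ j j' _ _ h
    obtain rfl : l = [] := List.length_eq_zero_iff.1 (by omega)
    obtain rfl : m = [] := List.length_eq_zero_iff.1 (by omega)
    obtain rfl : j = j' := apow_inj (a := a) (by simpa using h)
    simp
  | succ t ih =>
    -- a leading factor `a ^ n` is absorbed into the pending power of `a`
    have left : ∀ (l m : List (FreeMonoid A)), l.length + m.length ≤ t →
        (∀ w ∈ l, w ∈ insert (apow a n) (wset a b c)) →
        (∀ w ∈ m, w ∈ insert (apow a n) (wset a b c)) →
        ∀ f, 𝒞 f → ∀ j j' : ℕ, f j ≠ 0 → f j' ≠ 0 →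
          apow a j * (apow a n :: l).prod = apow a j' * m.prod →
          j % n = j' % n ∧ List.replicate (j / n) (apow a n) ++ apow a n :: l
            = List.replicate (j' / n) (apow a n) ++ m := by
      intro l m hlen hl hm f hf j j' hj hj' h
      have := ih l m hlen hl hm f hf (j + n) j' (by simpa using hj) hj'
        (by rw [← h, List.prod_cons, apow_add, mul_assoc])
      rwa [Nat.add_mod_right, habsorb] at this
    intro l m hlen hl hm f hf j j' hj hj' h
    rcases l with _ | ⟨x, l⟩ <;> rcases m with _ | ⟨y, m⟩
    · obtain rfl : j = j' := apow_inj (a := a) (by simpa using h)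
      simp
    · rw [List.forall_mem_cons] at hm
      rcases hm.1 with rfl | ⟨k, p, hkp, rfl⟩
      · have := left m [] (by simp at hlen ⊢; omega) hm.2 hl f hf j' j hj' hj h.symm
        exact ⟨this.1.symm, this.2.symm⟩
      · rw [List.prod_nil, mul_one, List.prod_cons, apow_mul_bay_mul] at h
        exact absurd h (apow_ne_b hab)
    · rw [List.forall_mem_cons] at hl
      rcases hl.1 with rfl | ⟨k, p, hkp, rfl⟩
      · exact left l [] (by simp at hlen ⊢; omega) hl.2 hm f hf j j' hj hj' h
      · rw [List.prod_nil, mul_one, List.prod_cons, apow_mul_bay_mul] at h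
        exact absurd h.symm (apow_ne_b hab)
    · have hl0 := hl
      have hm0 := hm
      rw [List.forall_mem_cons] at hl hm
      simp only [List.length_cons] at hlen
      rcases hl.1 with rfl | ⟨k, p, hkp, rfl⟩
      · exact left l _ (by simp; omega) hl.2 hm0 f hf j j' hj hj' h
      rcases hm.1 with rfl | ⟨k', p', hkp', rfl⟩
      · have := left m _ (by simp; omega) hm.2 hl0 f hf j' j hj' hj h.symm
        exact ⟨this.1.symm, this.2.symm⟩
      rw [List.prod_cons, List.prod_cons, apow_mul_bay_mul, apow_mul_bay_mul] at h
      obtain ⟨hjk, hrest⟩ := apow_b_inj hab h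
      have hjk' : (j : ZMod n) + k = j' + k' := by
        have := congrArg (Nat.cast : ℕ → ZMod n) hjk
        simpa using this
      set g := Matrix.vecMul f (shift ((j : ZMod n) + k) c) with hg
      have hgsum : ∀ z, g z = ∑ x, f x * c ((j : ZMod n) + k - x) z := fun z => rfl
      have hgp : g p ≠ 0 := by
        rw [hgsum]
        intro h0
        have := (Finset.sum_eq_zero_iff.1 h0) (j : ZMod n) (Finset.mem_univ _)
        simp [hj, hkp] at this
      have hgp' : g p' ≠ 0 := by
        rw [hgsum]
        intro h0
        have := (Finset.sum_eq_zero_iff.1 h0) (j' : ZMod n) (Finset.mem_univ _)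
        rw [hjk'] at this
        simp [hj', hkp'] at this
      have hrec := ih l m (by omega) hl.2 hm.2 g (hstep f hf _) p.val p'.val
        (by simpa using hgp) (by simpa using hgp') hrest
      rw [Nat.mod_eq_of_lt (ZMod.val_lt p), Nat.mod_eq_of_lt (ZMod.val_lt p'),
        Nat.div_eq_of_lt (ZMod.val_lt p), Nat.div_eq_of_lt (ZMod.val_lt p')] at hrec
      obtain ⟨hpp, rfl⟩ := hrec
      obtain rfl := ZMod.val_injective n hpp
      -- two distinct middle residues would give an entry of `g` at least two
      have hjj : (j : ZMod n) = j' := by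
        by_contra hne
        have h1 := hone f hf ((j : ZMod n) + k) p
        rw [← hg, hgsum] at h1
        have h2 := Finset.sum_le_sum_of_subset
          (f := fun x => f x * c ((j : ZMod n) + k - x) p)
          (Finset.subset_univ {(j : ZMod n), (j' : ZMod n)})
        rw [Finset.sum_pair hne, add_sub_cancel_left, hjk', add_sub_cancel_left] at h2
        rw [hjk'] at h1
        have h3 : 0 < f j * c k p := Nat.pos_of_ne_zero (mul_ne_zero hj hkp)
        have h4 : 0 < f j' * c k' p := Nat.pos_of_ne_zero (mul_ne_zero hj' hkp')
        omega
      obtain rfl : k = k' := by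
        rw [hjj] at hjk'
        exact add_left_cancel hjk'
      obtain rfl : j = j' := by omega
      simp

lemma isCode_wset (hab : a ≠ b) {c : Mat n} (𝒞 : (ZMod n → ℕ) → Prop)
    (hstep : ∀ f, 𝒞 f → ∀ r, 𝒞 (Matrix.vecMul f (shift r c)))
    (hone : ∀ f, 𝒞 f → ∀ r l, Matrix.vecMul f (shift r c) l ≤ 1)
    {f : ZMod n → ℕ} (hf : 𝒞 f) {p : ZMod n} (hp : f p ≠ 0) :
    IsCode (insert (apow a n) (wset a b c)) := by
  intro l m hl hm h
  have := decode hab 𝒞 hstep hone _ l m le_rfl hl hm f hf p.val p.val (by simpa using hp)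
    (by simpa using hp) (by rw [h])
  exact List.append_cancel_left this.2

end Words

/-! ### Compatible families as sets of matrices -/

section Families

variable {a b : A} {n : ℕ} [NeZero n] {E : Set (Set (FreeMonoid A))}

omit [NeZero n] in
lemma compatible_isCbc (hE : Compatible a b n E) {Y : Set (FreeMonoid A)} (hY : Y ∈ E) :
    IsCbc a b n Y :=
  hE Y hY [] (by simp)

lemma sum_indMat (hab : a ≠ b) {X : Set (FreeMonoid A)} (hX : IsCbc a b n X) :
    ∑ k, ∑ l, indMat n a b X k l = n := by
  rw [← ncard_wset_of_le_one hab, wset_indMat hX, hX.2.1]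
  intro k l
  simp only [indMat, Matrix.of_apply]
  split_ifs <;> simp

omit [NeZero n] in
lemma compList_append (X : Set (FreeMonoid A)) (L : List (ℕ × Set (FreeMonoid A)))
    (p : ℕ × Set (FreeMonoid A)) :
    compList a b n X (L ++ [p]) = comp a b n p.1 (compList a b n X L) p.2 := by
  simp [compList, List.foldl_append]

lemma exists_compList (hE : Compatible a b n E) (hab : a ≠ b) {N : Mat n}
    (hN : Prods (indMat n a b '' E) N) :
    ∃ X ∈ E, ∃ L : List (ℕ × Set (FreeMonoid A)),
      (∀ p ∈ L, p.1 < n ∧ p.2 ∈ E) ∧ wset a b N = compList a b n X L := by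
  induction hN with
  | base hM =>
    obtain ⟨X, hX, rfl⟩ := hM
    exact ⟨X, hX, [], by simp, wset_indMat (compatible_isCbc hE hX)⟩
  | step r _ hM ih =>
    obtain ⟨Y, hY, rfl⟩ := hM
    obtain ⟨X, hX, L, hL, h⟩ := ih
    refine ⟨X, hX, L ++ [(r.val, Y)], ?_, ?_⟩
    · intro p hp
      rcases List.mem_append.1 hp with hp | hp
      · exact hL p hp
      · obtain rfl := List.mem_singleton.1 hp
        exact ⟨ZMod.val_lt r, hY⟩
    · rw [compList_append, ← h]
      rw [← comp_wset hab, wset_indMat (compatible_isCbc hE hY)]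

lemma isCbc_prods (hE : Compatible a b n E) (hab : a ≠ b) {N : Mat n}
    (hN : Prods (indMat n a b '' E) N) : IsCbc a b n (wset a b N) := by
  obtain ⟨X, hX, L, hL, h⟩ := exists_compList hE hab hN
  rw [h]
  exact hE X hX L hL

lemma wset_mem_stableClosure (hE : Compatible a b n E) (hab : a ≠ b) {N : Mat n}
    (hN : Prods (indMat n a b '' E) N) : wset a b N ∈ stableClosure a b n E := by
  rintro S ⟨hS, hES⟩
  induction hN with
  | base hM =>
    obtain ⟨X, hX, rfl⟩ := hM
    rw [wset_indMat (compatible_isCbc hE hX)]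
    exact hES hX
  | step r _ hM ih =>
    obtain ⟨Y, hY, rfl⟩ := hM
    rw [← comp_wset hab, wset_indMat (compatible_isCbc hE hY)]
    exact hS.2 _ ih _ (hES hY) _ (ZMod.val_lt r)

/-- All products of letters of a compatible family are `0/1` matrices. Summed over all residues `t`,
the entries of `N * shift t M` total `n * n`, while each of these `n` products has support of size
`n`, because the composition it encodes is an `n`-cbc; so no entry exceeds `1`. -/
lemma prods_le_one (hE : Compatible a b n E) (hab : a ≠ b) {N : Mat n}
    (hN : Prods (indMat n a b '' E) N) : ∀ k l, N k l ≤ 1 := by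
  induction hN with
  | base hM =>
    obtain ⟨X, hX, rfl⟩ := hM
    intro k l
    simp only [indMat, Matrix.of_apply]
    split_ifs <;> simp
  | @step N M r hN hM ih =>
    have hMsum : ∑ k, ∑ l, M k l = n := by
      obtain ⟨Y, hY, rfl⟩ := hM
      exact sum_indMat hab (compatible_isCbc hE hY)
    have hNsum : ∑ k, ∑ l, N k l = n := by
      rw [← ncard_wset_of_le_one hab ih]
      exact (isCbc_prods hE hab hN).2.1
    have hsupp : ∀ t, ∑ k, ∑ l, (if (N * shift t M) k l ≠ 0 then 1 else 0) = n := fun t => by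
      rw [← ncard_wset hab]
      exact (isCbc_prods hE hab (hN.step t hM)).2.1
    -- summed over all residues, the compositions have `n * n` entries with multiplicity
    have htot : ∑ t, ∑ k, ∑ l, (N * shift t M) k l = n * n := by
      have h1 : ∀ k, ∑ t, ∑ l, (N * shift t M) k l = (∑ j, N k j) * n := by
        intro k
        simp only [Matrix.mul_apply, shift, Matrix.of_apply]
        rw [Finset.sum_congr rfl fun t _ => Finset.sum_comm, Finset.sum_comm, Finset.sum_mul]
        refine Finset.sum_congr rfl fun j _ => ?_
        simp only [← Finset.mul_sum]
        congr 1
        rw [sum_shift (fun t => ∑ l, M t l) j, hMsum]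
      rw [Finset.sum_comm, Finset.sum_congr rfl fun k _ => h1 k, ← Finset.sum_mul, hNsum]
    have hle : ∀ x : ZMod n × ZMod n × ZMod n,
        (if (N * shift x.1 M) x.2.1 x.2.2 ≠ 0 then 1 else 0)
          ≤ (N * shift x.1 M) x.2.1 x.2.2 := by
      intro x
      split_ifs <;> omega
    have heq : ∑ x : ZMod n × ZMod n × ZMod n,
        (if (N * shift x.1 M) x.2.1 x.2.2 ≠ 0 then 1 else 0)
          = ∑ x : ZMod n × ZMod n × ZMod n, (N * shift x.1 M) x.2.1 x.2.2 := by
      simp only [Fintype.sum_prod_type]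
      rw [htot, Finset.sum_congr rfl fun t _ => hsupp t]
      simp
    intro k l
    have := (Finset.sum_eq_sum_iff_of_le fun x _ => hle x).1 heq (r, k, l) (Finset.mem_univ _)
    simp only at this
    rw [← this]
    split_ifs <;> simp

lemma Prods.mul {𝓜 : Set (Mat n)} {N N' : Mat n} (hN : Prods 𝓜 N) (hN' : Prods 𝓜 N')
    (r : ZMod n) : Prods 𝓜 (N * shift r N') := by
  induction hN' with
  | base hM => exact hN.step r hM
  | step t _ hM ih =>
    rw [shift_mul, ← mul_assoc]
    exact ih.step t hM

/-- If the product of any left context with any letter pairs to `1` with `Q`, then every product of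
letters encodes an `n`-cbc bordered by `(P, Q)`. Unique decoding is tracked by left contexts,
starting from `P` itself: a nonzero entry `p` of `indVec n P` serves as initial state, which amounts
to prefixing both factorizations with `a ^ p`. -/
theorem isCbc_and_isBorder (hab : a ≠ b) {P Q : Finset ℤ} {𝓜 : Set (Mat n)}
    (hPQ : P.card * Q.card = n)
    (H : ∀ f, LCtx 𝓜 (indVec n P) f → ∀ M ∈ 𝓜, ∀ r s, pairing f M (indVec n Q) r s = 1)
    {N : Mat n} (hN : Prods 𝓜 N) :
    IsCbc a b n (wset a b N) ∧ IsBorder a b n P Q (wset a b N) := by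
  have hpair : ∀ f, LCtx 𝓜 (indVec n P) f → ∀ r s, pairing f N (indVec n Q) r s = 1 :=
    fun f hf => pairing_lctx_prods H hf hN
  have hle : ∀ k l, N k l ≤ 1 := le_one_of_pairing (hpair _ .base)
  refine ⟨⟨?_, ?_, ?_⟩, (isBorder_wset_iff hab P Q hle).2 (hpair _ .base)⟩
  · rintro w ⟨k, l, _, rfl⟩
    exact ⟨k.val, ZMod.val_lt k, l.val, ZMod.val_lt l, rfl⟩
  · rw [ncard_wset_of_le_one hab hle]
    apply sum_of_pairing (hpair _ .base)
    rw [sum_indVec, sum_indVec, hPQ]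
  · obtain ⟨p, hp⟩ : ∃ p, indVec n P p ≠ 0 := by
      by_contra! h0
      have := hpair _ .base 0 0
      simp [pairing, h0] at this
    exact isCode_wset hab (LCtx 𝓜 (indVec n P)) (fun f hf r => hf.vecMul_prods hN r)
      (fun f hf r l => vecMul_le_one (hpair f hf) r l) .base hp

end Families

theorem statement19 (a b : A) (hab : a ≠ b) (n : ℕ) (hn : 1 ≤ n)
    (E : Set (Set (FreeMonoid A))) (hE : Compatible a b n E)
    (P Q : Set ℤ) (hP : P.Finite) (hQ : Q.Finite)
    (hb : BordersFamily a b n P Q (stableClosure a b n E))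
    (X : Set (FreeMonoid A)) (hX : X ∈ E)
    (d₁ d₂ : ℤ)
    (hd₁ : IsCoprime d₁ (Q.ncard : ℤ)) (hd₂ : IsCoprime d₂ (P.ncard : ℤ)) :
    Compatible a b n (E ∪ {phiMap a b n d₁ d₂ X}) ∧
    BordersFamily a b n P Q
      (stableClosure a b n (E ∪ {phiMap a b n d₁ d₂ X})) := by
  have : NeZero n := ⟨by omega⟩
  obtain ⟨P, rfl⟩ := hP.exists_finset_coe
  obtain ⟨Q, rfl⟩ := hQ.exists_finset_coe
  rw [Set.ncard_coe_finset] at hd₁ hd₂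
  have hcbc : ∀ Y ∈ E, IsCbc a b n Y := fun Y hY => compatible_isCbc hE hY
  have hsum : ∀ M ∈ indMat n a b '' E, ∑ k, ∑ l, M k l = n := by
    rintro _ ⟨Y, hY, rfl⟩
    exact sum_indMat hab (hcbc Y hY)
  have hXmem : indMat n a b X ∈ indMat n a b '' E := ⟨X, hX, rfl⟩
  have HE : ∀ N, Prods (indMat n a b '' E) N →
      ∀ r s, pairing (indVec n P) N (indVec n Q) r s = 1 := fun N hN =>
    (isBorder_wset_iff hab P Q (prods_le_one hE hab hN)).1
      (hb _ (wset_mem_stableClosure hE hab hN))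
  have hPQ : P.card * Q.card = n := by
    have := sum_mul_sum_of_pairing (HE _ (.base hXmem)) (hsum _ hXmem)
    rwa [sum_indVec, sum_indVec] at this
  set 𝓜 : Set (Mat n) := insert (dil d₁ d₂ (indMat n a b X)) (indMat n a b '' E) with h𝓜
  have main : ∀ N, Prods 𝓜 N →
      IsCbc a b n (wset a b N) ∧ IsBorder a b n P Q (wset a b N) := fun N hN =>
    isCbc_and_isBorder hab hPQ
      (fun f hf => pairing_lctx_rctx HE hsum hXmem (by rwa [sum_indVec]) (by rwa [sum_indVec])
        hf _ .base) hN
  have hletter : ∀ Y ∈ E ∪ {phiMap a b n d₁ d₂ X}, ∃ M ∈ 𝓜, wset a b M = Y := by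
    rintro Y (hY | rfl)
    · exact ⟨_, Or.inr ⟨Y, hY, rfl⟩, wset_indMat (hcbc Y hY)⟩
    · exact ⟨_, Or.inl rfl, wset_dil hab (hcbc X hX) d₁ d₂⟩
  constructor
  · intro Y hY L hL
    obtain ⟨N, hN, hNL⟩ : ∃ N, Prods 𝓜 N ∧ wset a b N = compList a b n Y L := by
      induction L using List.reverseRecOn with
      | nil =>
        obtain ⟨M, hM, h⟩ := hletter Y hY
        exact ⟨M, .base hM, h⟩
      | append_singleton L p ih =>
        obtain ⟨N, hN, h⟩ := ih fun q hq => hL q (List.mem_append_left _ hq)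
        obtain ⟨hp, hpE⟩ := hL p (by simp)
        obtain ⟨M, hM, h'⟩ := hletter _ hpE
        refine ⟨_, hN.step (p.1 : ZMod n) hM, ?_⟩
        rw [compList_append, ← h, ← h', comp_wset' hab hp]
    rw [← hNL]
    exact (main N hN).1
  · intro Z hZ
    -- the sets encoded by products of letters form a stable set containing the family
    have hstable : StableSet a b n {Z | ∃ N, Prods 𝓜 N ∧ wset a b N = Z} := by
      constructor
      · rintro _ ⟨N, hN, rfl⟩
        exact (main N hN).1
      · rintro _ ⟨N, hN, rfl⟩ _ ⟨N', hN', rfl⟩ r hr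
        exact ⟨_, hN.mul hN' r, (comp_wset' hab hr N N').symm⟩
    obtain ⟨N, hN, rfl⟩ := hZ _ ⟨hstable, fun Y hY => by
      obtain ⟨M, hM, h⟩ := hletter Y hY
      exact ⟨M, .base hM, h⟩⟩
    exact (main N hN).2

end CBC
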